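/- Let σₓ = !![0, 1; 1, 0] and σ_z = !![1, 0; 0, −1] be the Pauli matrices in Matrix (Fin 2) (Fin 2) ℂ, and for (a, b) ∈ ZMod 2 × ZMod 2 let P_{a,b} := σₓ^a * σ_z^b. Let Φ⁺ : Matrix (Fin 2 × Fin 2) (Fin 2 × Fin 2) ℂ be the projector onto the maximally entangled state |Ψ⁺⟩ = (|00⟩ + |11⟩)/√2, i.e. Φ⁺ has entries (Φ⁺)_{(i,j),(k,l)} = 1/2 if i = j and k = l, and 0 otherwise. Then (1/4) • ∑_{(a,b) ∈ ZMod 2 × ZMod 2} (1 ⊗ₖ P_{a,b}) * Φ⁺ * (1 ⊗ₖ P_{a,b})ᴴ = (1/4) • (1 : Matrix (Fin 2 × Fin 2) (Fin 2 × Fin 2) ℂ), where ⊗ₖ denotes the Kronecker product of matrices. -/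

import Mathlib

open Matrix Kronecker

/-- The Pauli `X` matrix. -/
noncomputable def pauliX : Matrix (Fin 2) (Fin 2) ℂ := !![0, 1; 1, 0]

/-- The Pauli `Z` matrix. -/
noncomputable def pauliZ : Matrix (Fin 2) (Fin 2) ℂ := !![1, 0; 0, -1]

/-- The one-time pad unitaries `P_{a,b} = σₓ^a σ_z^b` for a two-bit key. -/
noncomputable def padUnitary (a b : ZMod 2) : Matrix (Fin 2) (Fin 2) ℂ :=
  pauliX ^ a.val * pauliZ ^ b.val

/-- The projector onto the maximally entangled state
`|Ψ⁺⟩ = (|00⟩ + |11⟩)/√2` of two qubits. -/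
noncomputable def maxEntProj : Matrix (Fin 2 × Fin 2) (Fin 2 × Fin 2) ℂ :=
  fun p q => if p.1 = p.2 ∧ q.1 = q.2 then 1 / 2 else 0

/-!
Since `(1 ⊗ₖ P) *ᵥ vec 1 = vec P`, encoding with `P` turns `Φ⁺` into `vec P (vec P)ᴴ / 2`. The four
pad unitaries satisfy `tr (Pₖᴴ Pₗ) = 2 δₖₗ`, so the `vec Pₖ / √2` form an orthonormal basis of
`ℂ² ⊗ ℂ²`, and averaging the projectors onto a basis gives the maximally mixed state.
-/

section OneTimePad

variable {𝕜 m n ι : Type*} [Field 𝕜] [StarRing 𝕜] [Fintype m] [Fintype n] [Fintype ι]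
  [DecidableEq m] [DecidableEq n] [DecidableEq ι]

-- Orthogonality says `Vᴴ * V = c • 1` for the matrix `V` with columns `v k`; since `V` has as many
-- rows as columns, its left inverse is also a right inverse, and `V * Vᴴ` is the sum below.
theorem sum_vecMulVec_star_eq_smul_one {v : ι → m → 𝕜} {c : 𝕜} (hc : c ≠ 0)
    (hcard : Fintype.card ι = Fintype.card m)
    (hv : ∀ k l, star (v k) ⬝ᵥ v l = if k = l then c else 0) :
    ∑ k, vecMulVec (v k) (star (v k)) = c • (1 : Matrix m m 𝕜) := by
  let V : Matrix m ι 𝕜 := (of v)ᵀ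
  have sum_eq : ∑ k, vecMulVec (v k) (star (v k)) = V * Vᴴ := by
    ext i j
    simp [V, mul_apply, Matrix.sum_apply, vecMulVec_apply]
  have gram : Vᴴ * V = c • 1 := by
    ext k l
    simpa [V, mul_apply, dotProduct, one_apply] using hv k l
  have left_inv : (c⁻¹ • Vᴴ) * V = 1 := by
    rw [smul_mul, gram, inv_smul_smul₀ hc]
  have right_inv : V * (c⁻¹ • Vᴴ) = 1 := (mul_eq_one_comm_of_card_eq _ _ _ hcard).mp left_inv
  rw [sum_eq, ← right_inv, Matrix.mul_smul, smul_inv_smul₀ hc]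

variable (𝕜 n) in
/-- The density matrix of the maximally entangled state `d^(-1/2) ∑ i, |i⟩ ⊗ |i⟩` on two copies of
a `d`-dimensional system, where `d = Fintype.card n`. The unnormalized state vector is encoded as
the vectorization of the identity matrix; if `d = 0` in `𝕜`, the value is the junk `0`. -/
def maximallyEntangledState : Matrix (n × n) (n × n) 𝕜 :=
  (Fintype.card n : 𝕜)⁻¹ • vecMulVec (vec 1) (star (vec 1))

theorem one_kronecker_mul_maximallyEntangledState_mul_conjTranspose (A : Matrix n n 𝕜) :
    (1 ⊗ₖ A) * maximallyEntangledState 𝕜 n * (1 ⊗ₖ A)ᴴ =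
      (Fintype.card n : 𝕜)⁻¹ • vecMulVec (vec A) (star (vec A)) := by
  have vec_eq : (1 ⊗ₖ A) *ᵥ vec (1 : Matrix n n 𝕜) = vec A := by
    rw [← vec_mul_eq_mulVec, Matrix.mul_one]
  rw [maximallyEntangledState, Matrix.mul_smul, smul_mul, mul_vecMulVec, vecMulVec_mul,
    ← star_mulVec, vec_eq]

theorem pad_on_maximally_entangled_state_general {P : ι → Matrix n n 𝕜}
    (hn : (Fintype.card n : 𝕜) ≠ 0) (hcard : Fintype.card ι = Fintype.card (n × n))
    (hP : ∀ k l, ((P k)ᴴ * P l).trace = if k = l then (Fintype.card n : 𝕜) else 0) :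
    ∑ k, (1 ⊗ₖ P k) * maximallyEntangledState 𝕜 n * (1 ⊗ₖ P k)ᴴ = 1 := by
  have completeness : ∑ k, vecMulVec (vec (P k)) (star (vec (P k))) = (Fintype.card n : 𝕜) • 1 :=
    sum_vecMulVec_star_eq_smul_one hn hcard fun k l => by rw [star_vec_dotProduct_vec, hP]
  simp_rw [one_kronecker_mul_maximallyEntangledState_mul_conjTranspose]
  rw [← Finset.smul_sum, completeness, inv_smul_smul₀ hn]

end OneTimePad

theorem maxEntProj_eq_maximallyEntangledState :
    maxEntProj = maximallyEntangledState ℂ (Fin 2) := by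
  ext ⟨i, j⟩ ⟨k, l⟩
  simp [maxEntProj, maximallyEntangledState, vecMulVec_apply, one_apply, eq_comm,
    ← ite_and, and_comm]

theorem pow_val_mul_pow_val {M : Type*} [Monoid M] {n : ℕ} [NeZero n] {x : M} (hx : x ^ n = 1)
    (a b : ZMod n) : x ^ a.val * x ^ b.val = x ^ (a + b).val := by
  rw [← pow_add, ZMod.val_add, ← pow_eq_pow_mod _ hx]

theorem pauliX_sq : pauliX ^ 2 = 1 := by
  simp [pauliX, sq, one_fin_two]

theorem pauliZ_sq : pauliZ ^ 2 = 1 := by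
  simp [pauliZ, sq, one_fin_two]

theorem isHermitian_pauliX : pauliX.IsHermitian := by
  ext i j
  fin_cases i <;> fin_cases j <;> simp [pauliX]

theorem isHermitian_pauliZ : pauliZ.IsHermitian := by
  ext i j
  fin_cases i <;> fin_cases j <;> simp [pauliZ]

theorem trace_padUnitary (a b : ZMod 2) :
    (padUnitary a b).trace = if a = 0 ∧ b = 0 then 2 else 0 := by
  have eq_zero_or_one : ∀ x : ZMod 2, x = 0 ∨ x = 1 := by decide
  rcases eq_zero_or_one a with rfl | rfl <;> rcases eq_zero_or_one b with rfl | rfl <;>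
    simp [padUnitary, pauliX, pauliZ, ZMod.val_one, trace_fin_two]

theorem trace_conjTranspose_padUnitary_mul_padUnitary (a b c d : ZMod 2) :
    ((padUnitary a b)ᴴ * padUnitary c d).trace = (padUnitary (a + c) (b + d)).trace := by
  calc ((padUnitary a b)ᴴ * padUnitary c d).trace
      = (pauliZ ^ b.val * (pauliX ^ a.val * pauliX ^ c.val * pauliZ ^ d.val)).trace := by
        simp only [padUnitary, conjTranspose_mul, (isHermitian_pauliX.pow _).eq,
          (isHermitian_pauliZ.pow _).eq, Matrix.mul_assoc]
    _ = (pauliX ^ a.val * pauliX ^ c.val * (pauliZ ^ d.val * pauliZ ^ b.val)).trace := by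
        rw [trace_mul_comm, Matrix.mul_assoc]
    _ = (padUnitary (a + c) (b + d)).trace := by
        rw [pow_val_mul_pow_val pauliX_sq, pow_val_mul_pow_val pauliZ_sq, add_comm d b, padUnitary]

theorem padUnitary_trace_orthogonal (p q : ZMod 2 × ZMod 2) :
    ((padUnitary p.1 p.2)ᴴ * padUnitary q.1 q.2).trace = if p = q then 2 else 0 := by
  simp only [trace_conjTranspose_padUnitary_mul_padUnitary, trace_padUnitary,
    CharTwo.add_eq_zero, Prod.ext_iff]

/-- **Security of the elementary one-time pad with a maximally entangled
reference.**  Encoding the second qubit of `|Ψ⁺⟩⟨Ψ⁺|` with a uniformly random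
pad unitary yields the two-qubit maximally mixed state `𝟙/4`. -/
theorem pad_on_maximally_entangled_state :
    (1 / 4 : ℂ) • ∑ p : ZMod 2 × ZMod 2,
        ((1 : Matrix (Fin 2) (Fin 2) ℂ) ⊗ₖ padUnitary p.1 p.2) * maxEntProj *
          ((1 : Matrix (Fin 2) (Fin 2) ℂ) ⊗ₖ padUnitary p.1 p.2)ᴴ
      = (1 / 4 : ℂ) • (1 : Matrix (Fin 2 × Fin 2) (Fin 2 × Fin 2) ℂ) := by
  rw [maxEntProj_eq_maximallyEntangledState, pad_on_maximally_entangled_state_general (by simp)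
    (by simp) fun p q => by simpa using padUnitary_trace_orthogonal p q]
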